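/- Let p ≥ 6, u = 2^(1−p), and let o_x, o_y ∈ [1, 1/(8u) − 2]. Let x_h, x_l, y_h, y_l ∈ F_p satisfy |x_l| ≤ o_x·u·|x_h| and |y_l| ≤ o_y·u·|y_h|. Then in any execution of sloppy double-word addition in faithful rounding, the concluding Fast2Sum (normalization) step is valid: |z_h + z_l − (s_h + w)| ≤ u²·|s_h + w|. -/

import Mathlib

/-- The radix-2, precision-`p` floating-point numbers with unlimited exponent range. -/
def Fp (p : ℕ) : Set ℝ := {x : ℝ | ∃ M e : ℤ, |M| ≤ 2 ^ p - 1 ∧ x = (M : ℝ) * (2 : ℝ) ^ e}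

/-- Round toward `-∞`: the largest floating-point number `≤ x`. -/
noncomputable def RD (p : ℕ) (x : ℝ) : ℝ := sSup {f : ℝ | f ∈ Fp p ∧ f ≤ x}

/-- Round toward `+∞`: the smallest floating-point number `≥ x`. -/
noncomputable def RU (p : ℕ) (x : ℝ) : ℝ := sInf {f : ℝ | f ∈ Fp p ∧ x ≤ f}

/-- `y` is a faithful rounding of `x`. -/
def Faithful (p : ℕ) (x y : ℝ) : Prop := y = RD p x ∨ y = RU p x

/-- All hypotheses of one execution of the sloppy double-word addition algorithm
(`2Sum(x_h,y_h)`, `v = ∘(x_l+y_l)`, `w = ∘(s_l+v)`, `Fast2Sum(s_h,w)`) in faithful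
rounding, each rounding chosen independently. -/
def SloppyFaithful (p : ℕ) (xh xl yh yl sh a' b' da db sl v w zh d zl : ℝ) : Prop :=
  Faithful p (xh + yh) sh ∧ Faithful p (sh - yh) a' ∧ Faithful p (sh - a') b' ∧
  Faithful p (xh - a') da ∧ Faithful p (yh - b') db ∧ Faithful p (da + db) sl ∧
  Faithful p (xl + yl) v ∧ Faithful p (sl + v) w ∧
  Faithful p (sh + w) zh ∧ Faithful p (zh - sh) d ∧ Faithful p (w - d) zl

/-!
Both roundings that matter in Fast2Sum have relative error at most `u`, so as soon as
`d = z_h - s_h` is exact, `z_l` rounds the error of `z_h` and the total error is at most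
`u² |s_h + w|`.

The difference `z_h - s_h` is a float whenever `s_h` is a multiple of some `2^e` with
`|w| ≤ (2^p - 1) 2^e`.  One may then take `w` to be a multiple of `2^e` too.  If `s_h + w` is not a
float, its own unit is `2^(r+1)` with `e ≤ r`, and both `z_h` and `s_h` are multiples of `2^r` that
are less than `2^p + 1` units apart.

To find such an exponent, let `m = max |x_h| |y_h|`, so that `|v|` is little more than `m / 4`.
* If `|x_h + y_h| ≤ min |x_h| |y_h|`, then `2Sum` is exact, hence `w = v`.  Moreover
  `m / 2 ≤ min |x_h| |y_h|`, and the smaller of the two exponents of `x_h` and `y_h` will do.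
* Otherwise `m / 2 < |x_h + y_h|`, hence `m / 2 ≤ |s_h|`, whereas the error terms of `2Sum` are so
  small that `|w| ≤ m / 2`, and the exponent of `s_h` will do.
-/

/-- The fixed-point numbers of unit `2^q`, that is, the integer multiples of `2^q`.  Floats are
handled through the grids containing them, which turns divisibility of significands into closure
under addition. -/
noncomputable def dyadicGrid (q : ℤ) : AddSubgroup ℝ := AddSubgroup.zmultiples ((2 : ℝ) ^ q)

/-- The exponent `q` of the spacing `2^q` of the precision-`p` floats in the binade of `x`.  At
`x = 0`, where there is no binade, it has the arbitrary value `1 - p`. -/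
noncomputable def canonicalExp (p : ℕ) (x : ℝ) : ℤ := Int.log 2 |x| + 1 - p

/-- The bound `u = 2^(1-p)` on the relative error of a faithful rounding. -/
noncomputable def unitRoundoff (p : ℕ) : ℝ := 2 ^ (1 - (p : ℤ))

/-- An execution of the `2Sum` algorithm on `x` and `y` in faithful rounding: `s` is the rounded
sum and `t` the computed approximation of its error. -/
structure TwoSumFaithful (p : ℕ) (x y s a b da db t : ℝ) : Prop where
  sum : Faithful p (x + y) s
  fst : Faithful p (s - y) a
  snd : Faithful p (s - a) b
  fst_error : Faithful p (x - a) da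
  snd_error : Faithful p (y - b) db
  error : Faithful p (da + db) t

/-- An execution of the `Fast2Sum` algorithm on `s` and `w` in faithful rounding: `z` is the rounded
sum and `t` the computed approximation of its error. -/
structure FastTwoSumFaithful (p : ℕ) (s w z d t : ℝ) : Prop where
  sum : Faithful p (s + w) z
  diff : Faithful p (z - s) d
  error : Faithful p (w - d) t

section

variable {p : ℕ} {q e : ℤ} {x y : ℝ}

/-! ### Floats and dyadic grids -/

theorem mem_dyadicGrid : x ∈ dyadicGrid q ↔ ∃ n : ℤ, x = n * 2 ^ q := by
  simp [dyadicGrid, AddSubgroup.mem_zmultiples_iff, eq_comm]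

theorem zpow_mem_dyadicGrid (h : q ≤ e) : (2 : ℝ) ^ e ∈ dyadicGrid q := by
  obtain ⟨j, rfl⟩ := Int.le.dest h
  refine mem_dyadicGrid.mpr ⟨2 ^ j, ?_⟩
  rw [zpow_add₀ two_ne_zero, zpow_natCast, mul_comm]
  norm_cast

theorem dyadicGrid_antitone : Antitone dyadicGrid := fun _ _ h =>
  AddSubgroup.zmultiples_le_of_mem (zpow_mem_dyadicGrid h)

theorem isGreatest_floor_dyadicGrid (q : ℤ) (x : ℝ) :
    IsGreatest {g : ℝ | g ∈ dyadicGrid q ∧ g ≤ x} (⌊x / 2 ^ q⌋ * 2 ^ q) := by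
  have hq : (0 : ℝ) < 2 ^ q := by positivity
  refine ⟨⟨mem_dyadicGrid.mpr ⟨_, rfl⟩, (le_div_iff₀ hq).mp (Int.floor_le _)⟩, ?_⟩
  rintro g ⟨hg, hgx⟩
  obtain ⟨n, rfl⟩ := mem_dyadicGrid.mp hg
  gcongr
  exact Int.le_floor.mpr ((le_div_iff₀ hq).mpr hgx)

theorem abs_floor_mul_zpow_sub_lt (q : ℤ) (x : ℝ) : |⌊x / 2 ^ q⌋ * 2 ^ q - x| < 2 ^ q := by
  have hq : (0 : ℝ) < 2 ^ q := by positivity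
  have hle := (isGreatest_floor_dyadicGrid q x).1.2
  have hlt : x < (⌊x / 2 ^ q⌋ + 1) * 2 ^ q := (div_lt_iff₀ hq).mp (Int.lt_floor_add_one _)
  rw [abs_sub_lt_iff]
  constructor <;> linarith

theorem mem_fp_iff :
    x ∈ Fp p ↔ ∃ q : ℤ, x ∈ dyadicGrid q ∧ |x| ≤ (2 ^ p - 1) * 2 ^ q := by
  have significand_le_iff (M q : ℤ) :
      |M| ≤ 2 ^ p - 1 ↔ |(M : ℝ) * 2 ^ q| ≤ (2 ^ p - 1) * 2 ^ q := by
    rw [abs_mul, abs_of_pos (by positivity : (0 : ℝ) < 2 ^ q),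
      mul_le_mul_iff_of_pos_right (by positivity)]
    exact_mod_cast Iff.rfl
  constructor
  · rintro ⟨M, q, hM, rfl⟩
    exact ⟨q, mem_dyadicGrid.mpr ⟨M, rfl⟩, (significand_le_iff M q).mp hM⟩
  · rintro ⟨q, hx, hle⟩
    obtain ⟨M, rfl⟩ := mem_dyadicGrid.mp hx
    exact ⟨M, q, (significand_le_iff M q).mpr hle, rfl⟩

theorem zero_mem_fp (p : ℕ) : (0 : ℝ) ∈ Fp p :=
  mem_fp_iff.mpr ⟨0, zero_mem _, by simpa using one_le_pow₀ one_le_two⟩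

theorem neg_mem_fp (h : x ∈ Fp p) : -x ∈ Fp p := by
  obtain ⟨q, hx, hle⟩ := mem_fp_iff.mp h
  exact mem_fp_iff.mpr ⟨q, neg_mem hx, by rwa [abs_neg]⟩

theorem neg_mem_fp_iff : -x ∈ Fp p ↔ x ∈ Fp p :=
  ⟨fun h => neg_neg x ▸ neg_mem_fp h, neg_mem_fp⟩

theorem abs_mem_fp (h : x ∈ Fp p) : |x| ∈ Fp p := by
  rcases abs_choice x with h' | h' <;> rw [h']
  exacts [h, neg_mem_fp h]

theorem half_mem_fp (h : x ∈ Fp p) : x / 2 ∈ Fp p := by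
  obtain ⟨M, e, hM, rfl⟩ := h
  exact ⟨M, e - 1, hM, by rw [zpow_sub_one₀ two_ne_zero]; ring⟩

/-- The bound admits the significands `±2^p`, since `2^p * 2^q = 1 * 2^(p+q)`. -/
theorem mem_fp_of_mem_dyadicGrid [NeZero p] (hx : x ∈ dyadicGrid q)
    (hlt : |x| < (2 ^ p + 1) * 2 ^ q) : x ∈ Fp p := by
  have hone : (1 : ℝ) ≤ 2 ^ p - 1 := by
    have : (2 : ℝ) ^ 1 ≤ 2 ^ p := pow_le_pow_right₀ one_le_two NeZero.one_le
    linarith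
  have hgrid : (2 : ℝ) ^ p * 2 ^ q = 2 ^ ((p : ℤ) + q) := by
    rw [zpow_add₀ two_ne_zero, zpow_natCast]
  obtain ⟨M, rfl⟩ := mem_dyadicGrid.mp hx
  have hM : |M| ≤ 2 ^ p := by
    rw [abs_mul, abs_of_pos (by positivity : (0 : ℝ) < 2 ^ q),
      mul_lt_mul_iff_of_pos_right (by positivity)] at hlt
    exact Int.lt_add_one_iff.mp (by exact_mod_cast hlt)
  rcases hM.lt_or_eq with hM | hM
  · exact ⟨M, q, Int.le_sub_one_of_lt hM, rfl⟩
  · have hpow : (2 : ℝ) ^ ((p : ℤ) + q) ∈ Fp p :=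
      mem_fp_iff.mpr ⟨p + q, zpow_mem_dyadicGrid le_rfl, by
        rw [abs_of_pos (by positivity)]
        exact le_mul_of_one_le_left (by positivity) hone⟩
    rcases (abs_eq (by positivity)).mp hM with rfl | rfl
    · simpa [hgrid] using hpow
    · simpa [hgrid] using neg_mem_fp hpow

theorem mem_dyadicGrid_of_mem_fp (hx : x ∈ Fp p) (h : 2 ^ p * 2 ^ q ≤ 2 * |x|) :
    x ∈ dyadicGrid q := by
  obtain ⟨e, hxe, hle⟩ := mem_fp_iff.mp hx
  refine dyadicGrid_antitone (le_of_not_gt fun heq => ?_) hxe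
  have hpow : (2 : ℝ) ^ p * 2 ^ (e + 1) ≤ 2 ^ p * 2 ^ q := by
    gcongr
    exacts [one_le_two, heq]
  rw [zpow_add_one₀ two_ne_zero] at hpow
  have he : (0 : ℝ) < 2 ^ e := by positivity
  linarith

/-! ### The binade of a real number -/

theorem canonicalExp_neg (p : ℕ) (x : ℝ) : canonicalExp p (-x) = canonicalExp p x := by
  rw [canonicalExp, canonicalExp, abs_neg]

theorem two_pow_mul_zpow_canonicalExp (p : ℕ) (x : ℝ) :
    (2 : ℝ) ^ p * 2 ^ canonicalExp p x = 2 * 2 ^ Int.log 2 |x| := by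
  rw [canonicalExp, ← zpow_natCast, ← zpow_add₀ two_ne_zero, add_sub_cancel,
    zpow_add_one₀ two_ne_zero, mul_comm]

theorem canonicalExp_le_log (p : ℕ) [NeZero p] (x : ℝ) : canonicalExp p x ≤ Int.log 2 |x| := by
  have : 1 ≤ p := NeZero.one_le
  rw [canonicalExp]
  lia

theorem abs_lt_two_pow_mul_zpow_canonicalExp (p : ℕ) (x : ℝ) :
    |x| < 2 ^ p * 2 ^ canonicalExp p x := by
  rw [two_pow_mul_zpow_canonicalExp, mul_comm, ← zpow_add_one₀ two_ne_zero]
  exact_mod_cast Int.lt_zpow_succ_log_self one_lt_two |x|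

theorem zpow_log_abs_le (hx : x ≠ 0) : (2 : ℝ) ^ Int.log 2 |x| ≤ |x| := by
  exact_mod_cast Int.zpow_log_le_self one_lt_two (abs_pos.mpr hx)

theorem two_pow_mul_zpow_canonicalExp_le (p : ℕ) (hx : x ≠ 0) :
    2 ^ p * 2 ^ canonicalExp p x ≤ 2 * |x| := by
  rw [two_pow_mul_zpow_canonicalExp]
  gcongr
  exact zpow_log_abs_le hx

theorem unitRoundoff_pos (p : ℕ) : 0 < unitRoundoff p := by
  rw [unitRoundoff]
  positivity

theorem unitRoundoff_antitone : Antitone unitRoundoff := fun _ _ h =>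
  zpow_le_zpow_right₀ one_le_two (by lia)

theorem unitRoundoff_le_one (p : ℕ) [NeZero p] : unitRoundoff p ≤ 1 :=
  (unitRoundoff_antitone NeZero.one_le).trans_eq (by norm_num [unitRoundoff])

theorem unitRoundoff_mul_two_pow (p : ℕ) : unitRoundoff p * 2 ^ p = 2 := by
  rw [unitRoundoff, ← zpow_natCast, ← zpow_add₀ two_ne_zero, sub_add_cancel, zpow_one]

theorem zpow_canonicalExp_le (p : ℕ) (hx : x ≠ 0) :
    2 ^ canonicalExp p x ≤ unitRoundoff p * |x| := by
  have h : (2 : ℝ) ^ p * 2 ^ canonicalExp p x ≤ 2 ^ p * (unitRoundoff p * |x|) := by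
    rw [← mul_assoc, mul_comm _ (unitRoundoff p), unitRoundoff_mul_two_pow]
    exact two_pow_mul_zpow_canonicalExp_le p hx
  exact le_of_mul_le_mul_left h (by positivity)

/-! ### Directed and faithful rounding -/

theorem isGreatest_floor_fp [NeZero p] (x : ℝ) :
    IsGreatest {f : ℝ | f ∈ Fp p ∧ f ≤ x}
      (⌊x / 2 ^ canonicalExp p x⌋ * 2 ^ canonicalExp p x) := by
  have hgrid := isGreatest_floor_dyadicGrid (canonicalExp p x) x
  have hclose := abs_floor_mul_zpow_sub_lt (canonicalExp p x) x
  have hbelow := abs_lt_two_pow_mul_zpow_canonicalExp p x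
  have hmem : |(⌊x / 2 ^ canonicalExp p x⌋ : ℝ) * 2 ^ canonicalExp p x| <
      ((2 : ℝ) ^ p + 1) * 2 ^ canonicalExp p x := by
    linarith [(abs_sub_abs_le_abs_sub _ _).trans_lt hclose]
  refine ⟨⟨mem_fp_of_mem_dyadicGrid hgrid.1.1 hmem, hgrid.1.2⟩, ?_⟩
  rintro f ⟨hf, hfx⟩
  rcases eq_or_ne x 0 with rfl | hx
  · simpa using hfx
  by_cases hbig : 2 ^ Int.log 2 |x| ≤ |f|
  · refine hgrid.2 ⟨mem_dyadicGrid_of_mem_fp hf ?_, hfx⟩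
    rw [two_pow_mul_zpow_canonicalExp]
    gcongr
  -- A float of absolute value less than `2 ^ Int.log 2 |x|` can only be below `x` if `x` is
  -- positive, and then this power of two is a grid point in between.
  have hlog := zpow_log_abs_le hx
  have hendpoint : (2 : ℝ) ^ Int.log 2 |x| ≤ x := by
    rcases le_abs.mp hlog with h | h
    · exact h
    · linarith [neg_abs_le f]
  have hfle : f ≤ 2 ^ Int.log 2 |x| := (le_abs_self f).trans (not_le.mp hbig).le
  exact hfle.trans (hgrid.2 ⟨zpow_mem_dyadicGrid (canonicalExp_le_log p x), hendpoint⟩)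

theorem rd_eq_floor [NeZero p] (x : ℝ) :
    RD p x = ⌊x / 2 ^ canonicalExp p x⌋ * 2 ^ canonicalExp p x :=
  (isGreatest_floor_fp x).csSup_eq

theorem isGreatest_rd [NeZero p] (x : ℝ) : IsGreatest {f : ℝ | f ∈ Fp p ∧ f ≤ x} (RD p x) := by
  rw [rd_eq_floor]
  exact isGreatest_floor_fp x

theorem rd_mem_dyadicGrid [NeZero p] (x : ℝ) : RD p x ∈ dyadicGrid (canonicalExp p x) := by
  rw [rd_eq_floor]
  exact (isGreatest_floor_dyadicGrid _ x).1.1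

theorem abs_rd_sub_lt [NeZero p] (x : ℝ) : |RD p x - x| < 2 ^ canonicalExp p x := by
  rw [rd_eq_floor]
  exact abs_floor_mul_zpow_sub_lt _ x

theorem ru_eq_neg_rd_neg (p : ℕ) (x : ℝ) : RU p x = -RD p (-x) := by
  rw [RU, RD, Real.sInf_def]
  congr 2
  ext f
  exact and_congr neg_mem_fp_iff le_neg

theorem isLeast_ru [NeZero p] (x : ℝ) : IsLeast {f : ℝ | f ∈ Fp p ∧ x ≤ f} (RU p x) := by
  obtain ⟨⟨hmem, hle⟩, hub⟩ := isGreatest_rd (p := p) (-x)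
  rw [ru_eq_neg_rd_neg]
  exact ⟨⟨neg_mem_fp_iff.mpr hmem, le_neg.mpr hle⟩,
    fun f hf => neg_le.mpr (hub ⟨neg_mem_fp_iff.mpr hf.1, neg_le_neg hf.2⟩)⟩

namespace Faithful

variable [NeZero p]

theorem mem_fp (h : Faithful p x y) : y ∈ Fp p := by
  rcases h with rfl | rfl
  exacts [(isGreatest_rd x).1.1, (isLeast_ru x).1.1]

theorem mem_dyadicGrid (h : Faithful p x y) : y ∈ dyadicGrid (canonicalExp p x) := by
  rcases h with rfl | rfl
  · exact rd_mem_dyadicGrid x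
  · rw [ru_eq_neg_rd_neg, ← canonicalExp_neg]
    exact neg_mem (rd_mem_dyadicGrid (-x))

theorem abs_sub_lt (h : Faithful p x y) : |y - x| < 2 ^ canonicalExp p x := by
  rcases h with rfl | rfl
  · exact abs_rd_sub_lt x
  · rw [ru_eq_neg_rd_neg, ← canonicalExp_neg, ← abs_neg, neg_sub, sub_neg_eq_add, add_comm,
      ← sub_neg_eq_add]
    exact abs_rd_sub_lt (-x)

theorem le_of_le {f : ℝ} (h : Faithful p x y) (hf : f ∈ Fp p) (hfx : f ≤ x) : f ≤ y := by
  rcases h with rfl | rfl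
  exacts [(isGreatest_rd x).2 ⟨hf, hfx⟩, hfx.trans (isLeast_ru x).1.2]

theorem ge_of_ge {f : ℝ} (h : Faithful p x y) (hf : f ∈ Fp p) (hxf : x ≤ f) : y ≤ f := by
  rcases h with rfl | rfl
  exacts [(isGreatest_rd x).1.2.trans hxf, (isLeast_ru x).2 ⟨hf, hxf⟩]

theorem eq_of_mem_fp (h : Faithful p x y) (hx : x ∈ Fp p) : y = x :=
  le_antisymm (h.ge_of_ge hx le_rfl) (h.le_of_le hx le_rfl)

theorem eq_zero (h : Faithful p 0 y) : y = 0 :=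
  h.eq_of_mem_fp (zero_mem_fp p)

theorem abs_le_abs {f : ℝ} (h : Faithful p x y) (hf : f ∈ Fp p) (hfx : |f| ≤ |x|) :
    |f| ≤ |y| := by
  rcases le_abs.mp hfx with hle | hle
  · exact (h.le_of_le (abs_mem_fp hf) hle).trans (le_abs_self y)
  · have := h.ge_of_ge (neg_mem_fp_iff.mpr (abs_mem_fp hf)) (le_neg.mpr hle)
    exact (le_neg.mpr this).trans (neg_le_abs y)

theorem abs_sub_le (h : Faithful p x y) : |y - x| ≤ unitRoundoff p * |x| := by
  rcases eq_or_ne x 0 with rfl | hx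
  · simp [h.eq_zero]
  · exact h.abs_sub_lt.le.trans (zpow_canonicalExp_le p hx)

theorem abs_le (h : Faithful p x y) : |y| ≤ (1 + unitRoundoff p) * |x| := by
  linarith [h.abs_sub_le, abs_sub_abs_le_abs_sub y x]

end Faithful

/-! ### `2Sum` -/

theorem exists_add_mem_dyadicGrid (hx : x ∈ Fp p) (hy : y ∈ Fp p) :
    ∃ q : ℤ, x + y ∈ dyadicGrid q ∧ min |x| |y| ≤ (2 ^ p - 1) * 2 ^ q := by
  obtain ⟨qx, hqx, hlex⟩ := mem_fp_iff.mp hx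
  obtain ⟨qy, hqy, hley⟩ := mem_fp_iff.mp hy
  rcases le_total qx qy with h | h
  · exact ⟨qx, add_mem hqx (dyadicGrid_antitone h hqy), (min_le_left _ _).trans hlex⟩
  · exact ⟨qy, add_mem (dyadicGrid_antitone h hqx) hqy, (min_le_right _ _).trans hley⟩

/-- A form of Sterbenz's lemma. -/
theorem add_mem_fp_of_abs_add_le_min (hx : x ∈ Fp p) (hy : y ∈ Fp p)
    (h : |x + y| ≤ min |x| |y|) : x + y ∈ Fp p := by
  obtain ⟨q, hq, hle⟩ := exists_add_mem_dyadicGrid hx hy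
  exact mem_fp_iff.mpr ⟨q, hq, h.trans hle⟩

theorem max_abs_le_min_abs_add_abs_add (x y : ℝ) :
    max |x| |y| ≤ min |x| |y| + |x + y| := by
  have hx := abs_add_le (x + y) (-y)
  have hy := abs_add_le (x + y) (-x)
  rw [add_neg_cancel_right, abs_neg] at hx
  rw [add_neg_cancel_comm, abs_neg] at hy
  rcases le_total |x| |y| with h | h <;> simp only [h, max_eq_left, max_eq_right, min_eq_left,
    min_eq_right] <;> linarith

namespace TwoSumFaithful

variable [NeZero p] {s a b da db t m : ℝ}

theorem error_eq_zero (h : TwoSumFaithful p x y s a b da db t) (hx : x ∈ Fp p) (hy : y ∈ Fp p)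
    (hxy : x + y ∈ Fp p) : t = 0 := by
  obtain ⟨hs, ha, hb, hda, hdb, ht⟩ := h
  obtain rfl : s = x + y := hs.eq_of_mem_fp hxy
  rw [add_sub_cancel_right] at ha
  obtain rfl : a = x := ha.eq_of_mem_fp hx
  rw [add_sub_cancel_left] at hb
  obtain rfl : b = y := hb.eq_of_mem_fp hy
  rw [sub_self] at hda hdb
  rw [hda.eq_zero, hdb.eq_zero, add_zero] at ht
  exact ht.eq_zero

theorem abs_sub_fst_add_abs_sub_snd_le (h : TwoSumFaithful p x y s a b da db t) (hx : |x| ≤ m)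
    (hy : |y| ≤ m) :
    |x - a| + |y - b| ≤
      (5 * unitRoundoff p + 5 * unitRoundoff p ^ 2 + 2 * unitRoundoff p ^ 3) * m := by
  have hu := unitRoundoff_pos p
  set u := unitRoundoff p
  have hs : |s - (x + y)| ≤ 2 * u * m := calc
    |s - (x + y)| ≤ u * |x + y| := h.sum.abs_sub_le
    _ ≤ u * (m + m) := by gcongr; exact (abs_add_le x y).trans (add_le_add hx hy)
    _ = 2 * u * m := by ring
  have ha : |a - (s - y)| ≤ (u + 2 * u ^ 2) * m := calc
    |a - (s - y)| ≤ u * |x + (s - (x + y))| := by convert h.fst.abs_sub_le using 3; ring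
    _ ≤ u * (m + 2 * u * m) := by gcongr; exact (abs_add_le _ _).trans (add_le_add hx hs)
    _ = (u + 2 * u ^ 2) * m := by ring
  have hb : |b - (s - a)| ≤ (u + u ^ 2 + 2 * u ^ 3) * m := calc
    |b - (s - a)| ≤ u * |y - (a - (s - y))| := by convert h.snd.abs_sub_le using 3; ring
    _ ≤ u * (m + (u + 2 * u ^ 2) * m) := by
      gcongr; exact (abs_sub _ _).trans (add_le_add hy ha)
    _ = (u + u ^ 2 + 2 * u ^ 3) * m := by ring
  have hxa : |x - a| ≤ |s - (x + y)| + |a - (s - y)| := calc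
    |x - a| = |(s - (x + y)) + (a - (s - y))| := by rw [abs_sub_comm]; congr 1; ring
    _ ≤ |s - (x + y)| + |a - (s - y)| := abs_add_le _ _
  have hyb : |y - b| ≤ |a - (s - y)| + |b - (s - a)| := calc
    |y - b| = |(a - (s - y)) - (b - (s - a))| := by congr 1; ring
    _ ≤ |a - (s - y)| + |b - (s - a)| := abs_sub _ _
  linarith

theorem abs_error_le (h : TwoSumFaithful p x y s a b da db t) (hx : |x| ≤ m) (hy : |y| ≤ m) :
    |t| ≤ (1 + unitRoundoff p) ^ 2 *
      ((5 * unitRoundoff p + 5 * unitRoundoff p ^ 2 + 2 * unitRoundoff p ^ 3) * m) := by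
  have hu := unitRoundoff_pos p
  calc |t| ≤ (1 + unitRoundoff p) * |da + db| := h.error.abs_le
    _ ≤ (1 + unitRoundoff p) *
        ((1 + unitRoundoff p) * |x - a| + (1 + unitRoundoff p) * |y - b|) := by
      gcongr
      exact (abs_add_le da db).trans (add_le_add h.fst_error.abs_le h.snd_error.abs_le)
    _ = (1 + unitRoundoff p) ^ 2 * (|x - a| + |y - b|) := by ring
    _ ≤ _ := by gcongr; exact h.abs_sub_fst_add_abs_sub_snd_le hx hy

end TwoSumFaithful

/-! ### `Fast2Sum` -/

theorem exists_common_dyadicGrid {s w : ℝ} (hw : w ∈ Fp p) (hs : s ∈ dyadicGrid e)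
    (hwe : |w| ≤ (2 ^ p - 1) * 2 ^ e) :
    ∃ q : ℤ, s ∈ dyadicGrid q ∧ w ∈ dyadicGrid q ∧ |w| ≤ (2 ^ p - 1) * 2 ^ q := by
  obtain ⟨q, hwq, hle⟩ := mem_fp_iff.mp hw
  rcases le_total q e with h | h
  · exact ⟨q, dyadicGrid_antitone h hs, hwq, hle⟩
  · exact ⟨e, hs, dyadicGrid_antitone h hwq, hwe⟩

theorem mem_dyadicGrid_of_le_abs_add {r : ℤ} {s w : ℝ} (hs : s ∈ Fp p) (hse : s ∈ dyadicGrid e)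
    (hwe : |w| ≤ (2 ^ p - 1) * 2 ^ e) (her : e ≤ r) (hsum : 2 ^ p * 2 ^ r ≤ |s + w|) :
    s ∈ dyadicGrid r := by
  rcases her.eq_or_lt with rfl | her
  · exact hse
  refine mem_dyadicGrid_of_mem_fp hs ?_
  have hw : 2 * |w| ≤ 2 ^ p * 2 ^ r := calc
    2 * |w| ≤ 2 * (2 ^ p * 2 ^ e) := by
      gcongr
      exact hwe.trans (by gcongr; exact sub_le_self _ zero_le_one)
    _ = 2 ^ p * 2 ^ (e + 1) := by rw [zpow_add_one₀ two_ne_zero]; ring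
    _ ≤ 2 ^ p * 2 ^ r := by gcongr; exacts [one_le_two, her]
  linarith [abs_add_le s w]

theorem lt_canonicalExp_of_notMem_fp [NeZero p] (hx : x ∈ dyadicGrid e) (hxp : x ∉ Fp p) :
    e < canonicalExp p x := by
  by_contra! hle
  refine hxp (mem_fp_of_mem_dyadicGrid (dyadicGrid_antitone hle hx) ?_)
  refine (abs_lt_two_pow_mul_zpow_canonicalExp p x).trans ?_
  gcongr
  exact lt_add_one _

theorem Faithful.sub_left_mem_fp [NeZero p] {s w z : ℝ} (hz : Faithful p (s + w) z)
    (hs : s ∈ Fp p) (hw : w ∈ Fp p) (hse : s ∈ dyadicGrid e) (hwe : |w| ≤ (2 ^ p - 1) * 2 ^ e) :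
    z - s ∈ Fp p := by
  obtain ⟨q, hsq, hwq, hwle⟩ := exists_common_dyadicGrid hw hse hwe
  by_cases hsum : s + w ∈ Fp p
  · rwa [hz.eq_of_mem_fp hsum, add_sub_cancel_left]
  have hqlt := lt_canonicalExp_of_notMem_fp (add_mem hsq hwq) hsum
  have hbinade := two_pow_mul_zpow_canonicalExp_le p (x := s + w)
    fun h => hsum (h ▸ zero_mem_fp p)
  have hzgrid := hz.mem_dyadicGrid
  have herror := hz.abs_sub_lt
  obtain ⟨r, hr⟩ : ∃ r, canonicalExp p (s + w) = r + 1 := ⟨_, (sub_add_cancel _ 1).symm⟩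
  rw [hr] at hqlt hzgrid
  rw [hr, zpow_add_one₀ two_ne_zero] at hbinade herror
  have hqr : q ≤ r := Int.lt_add_one_iff.mp hqlt
  have hsgrid := mem_dyadicGrid_of_le_abs_add hs hsq hwle hqr (by linarith)
  refine mem_fp_of_mem_dyadicGrid
    (sub_mem (dyadicGrid_antitone (Int.le_add_one le_rfl) hzgrid) hsgrid) ?_
  have hwr : |w| ≤ (2 ^ p - 1) * 2 ^ r := hwle.trans (by
    gcongr
    exacts [sub_nonneg.mpr (one_le_pow₀ one_le_two), one_le_two])
  calc |z - s| = |(z - (s + w)) + w| := by congr 1; ring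
    _ ≤ |z - (s + w)| + |w| := abs_add_le _ _
    _ < (2 ^ p + 1) * 2 ^ r := by linarith

namespace FastTwoSumFaithful

variable [NeZero p] {s w z d t : ℝ}

theorem abs_add_sub_le_of_sub_mem_fp (h : FastTwoSumFaithful p s w z d t) (hzs : z - s ∈ Fp p) :
    |z + t - (s + w)| ≤ unitRoundoff p ^ 2 * |s + w| := by
  obtain ⟨hz, hd, ht⟩ := h
  have hu := unitRoundoff_pos p
  obtain rfl : d = z - s := hd.eq_of_mem_fp hzs
  calc |z + t - (s + w)| = |t - (w - (z - s))| := by congr 1; ring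
    _ ≤ unitRoundoff p * |w - (z - s)| := ht.abs_sub_le
    _ = unitRoundoff p * |z - (s + w)| := by rw [abs_sub_comm z]; congr 2; ring
    _ ≤ unitRoundoff p * (unitRoundoff p * |s + w|) := by gcongr; exact hz.abs_sub_le
    _ = unitRoundoff p ^ 2 * |s + w| := by ring

theorem abs_add_sub_le_of_mem_dyadicGrid (h : FastTwoSumFaithful p s w z d t) (hs : s ∈ Fp p)
    (hw : w ∈ Fp p) (hse : s ∈ dyadicGrid e) (hwe : |w| ≤ (2 ^ p - 1) * 2 ^ e) :
    |z + t - (s + w)| ≤ unitRoundoff p ^ 2 * |s + w| :=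
  h.abs_add_sub_le_of_sub_mem_fp (h.sum.sub_left_mem_fp hs hw hse hwe)

theorem abs_add_sub_le_of_abs_le_abs (h : FastTwoSumFaithful p s w z d t) (hs : s ∈ Fp p)
    (hw : w ∈ Fp p) (hws : |w| ≤ |s|) :
    |z + t - (s + w)| ≤ unitRoundoff p ^ 2 * |s + w| := by
  obtain ⟨e, hse, hle⟩ := mem_fp_iff.mp hs
  exact h.abs_add_sub_le_of_mem_dyadicGrid hs hw hse (hws.trans hle)

end FastTwoSumFaithful

/-! ### Sloppy double-word addition -/

theorem unitRoundoff_le_of_six_le (hp : 6 ≤ p) : unitRoundoff p ≤ 1 / 32 :=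
  (unitRoundoff_antitone hp).trans_eq (by norm_num [unitRoundoff])

theorem exists_mem_dyadicGrid_of_abs_add_le_min [NeZero p] {xh yh l s a b da db sl v w : ℝ}
    (hxh : xh ∈ Fp p) (hyh : yh ∈ Fp p) (hl : |l| ≤ max |xh| |yh| / 4)
    (hcancel : |xh + yh| ≤ min |xh| |yh|)
    (hsum : TwoSumFaithful p xh yh s a b da db sl) (hv : Faithful p l v)
    (hw : Faithful p (sl + v) w) :
    ∃ e : ℤ, s ∈ dyadicGrid e ∧ |w| ≤ (2 ^ p - 1) * 2 ^ e := by
  have hmem := add_mem_fp_of_abs_add_le_min hxh hyh hcancel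
  obtain ⟨e, he, hmin⟩ := exists_add_mem_dyadicGrid hxh hyh
  refine ⟨e, (hsum.sum.eq_of_mem_fp hmem).symm ▸ he, le_trans ?_ hmin⟩
  rw [hsum.error_eq_zero hxh hyh hmem, zero_add] at hw
  have hv2 : |v| ≤ 2 * |l| := hv.abs_le.trans (by
    gcongr
    linarith [unitRoundoff_le_one p])
  calc |w| = |v| := by rw [hw.eq_of_mem_fp hv.mem_fp]
    _ ≤ max |xh| |yh| / 2 := by linarith
    _ ≤ min |xh| |yh| := by linarith [max_abs_le_min_abs_add_abs_add xh yh]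

theorem abs_le_abs_of_min_lt_abs_add (hp : 6 ≤ p) {xh yh l s a b da db sl v w : ℝ}
    (hxh : xh ∈ Fp p) (hyh : yh ∈ Fp p) (hl : |l| ≤ max |xh| |yh| / 4)
    (hlarge : min |xh| |yh| < |xh + yh|)
    (hsum : TwoSumFaithful p xh yh s a b da db sl) (hv : Faithful p l v)
    (hw : Faithful p (sl + v) w) : |w| ≤ |s| := by
  have : NeZero p := ⟨by lia⟩
  have hu := unitRoundoff_le_of_six_le hp
  have hu_pos := unitRoundoff_pos p
  set m := max |xh| |yh| with hm
  have hm0 : 0 ≤ m := (abs_nonneg xh).trans (le_max_left _ _)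
  have hw_le : |w| ≤ m / 2 := by
    have hsl_le : |sl| ≤
        (1 + 1 / 32) ^ 2 * ((5 * (1 / 32) + 5 * (1 / 32) ^ 2 + 2 * (1 / 32) ^ 3) * m) :=
      (hsum.abs_error_le (le_max_left _ _) (le_max_right _ _)).trans (by gcongr)
    have hv_le : |v| ≤ (1 + 1 / 32) * (m / 4) := hv.abs_le.trans (by gcongr)
    calc |w| ≤ (1 + 1 / 32) * (|sl| + |v|) :=
          hw.abs_le.trans (by gcongr; exact abs_add_le sl v)
      _ ≤ m / 2 := by linarith
  have hm_mem : m ∈ Fp p := by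
    rcases max_choice |xh| |yh| with h | h <;> rw [hm, h]
    exacts [abs_mem_fp hxh, abs_mem_fp hyh]
  have hs_ge : |m / 2| ≤ |s| := by
    refine hsum.sum.abs_le_abs (half_mem_fp hm_mem) ?_
    rw [abs_of_nonneg (by positivity)]
    linarith [max_abs_le_min_abs_add_abs_add xh yh]
  exact hw_le.trans ((le_abs_self _).trans hs_ge)

theorem abs_le_div_eight_of_overlap {u o l h : ℝ} (hu : 0 < u) (ho : o ≤ 1 / (8 * u) - 2)
    (hl : |l| ≤ o * u * |h|) : |l| ≤ |h| / 8 := by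
  have hou : o * u ≤ 1 / 8 := calc
    o * u ≤ 1 / (8 * u) * u := by gcongr; linarith
    _ = 1 / 8 := by field_simp
  calc |l| ≤ o * u * |h| := hl
    _ ≤ 1 / 8 * |h| := by gcongr
    _ = |h| / 8 := by ring

theorem abs_add_le_max_div_four_of_overlap {u ox oy xh xl yh yl : ℝ} (hu : 0 < u)
    (hox : ox ≤ 1 / (8 * u) - 2) (hoy : oy ≤ 1 / (8 * u) - 2) (hx : |xl| ≤ ox * u * |xh|)
    (hy : |yl| ≤ oy * u * |yh|) : |xl + yl| ≤ max |xh| |yh| / 4 := by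
  have hxl := abs_le_div_eight_of_overlap hu hox hx
  have hyl := abs_le_div_eight_of_overlap hu hoy hy
  linarith [abs_add_le xl yl, le_max_left |xh| |yh|, le_max_right |xh| |yh|]

theorem sloppy_normalization_valid_general (hp : 6 ≤ p) {xh xl yh yl : ℝ}
    (hxh : xh ∈ Fp p) (hyh : yh ∈ Fp p) (hl : |xl + yl| ≤ max |xh| |yh| / 4)
    {sh a' b' da db sl v w zh d zl : ℝ}
    (hrun : SloppyFaithful p xh xl yh yl sh a' b' da db sl v w zh d zl) :
    |zh + zl - (sh + w)| ≤ unitRoundoff p ^ 2 * |sh + w| := by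
  have : NeZero p := ⟨by lia⟩
  obtain ⟨hsh, ha, hb, hda, hdb, hsl, hv, hw, hzh, hd, hzl⟩ := hrun
  have hsum : TwoSumFaithful p xh yh sh a' b' da db sl := ⟨hsh, ha, hb, hda, hdb, hsl⟩
  have hnorm : FastTwoSumFaithful p sh w zh d zl := ⟨hzh, hd, hzl⟩
  rcases le_or_gt |xh + yh| (min |xh| |yh|) with hcancel | hlarge
  · obtain ⟨e, hse, hwe⟩ := exists_mem_dyadicGrid_of_abs_add_le_min hxh hyh hl hcancel
      hsum hv hw
    exact hnorm.abs_add_sub_le_of_mem_dyadicGrid hsh.mem_fp hw.mem_fp hse hwe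
  · have hws := abs_le_abs_of_min_lt_abs_add hp hxh hyh hl hlarge hsum hv hw
    exact hnorm.abs_add_sub_le_of_abs_le_abs hsh.mem_fp hw.mem_fp hws

end

theorem sloppy_normalization_valid
    (p : ℕ) (hp : 6 ≤ p) (u : ℝ) (hu : u = (2 : ℝ) ^ (1 - (p : ℤ)))
    (ox oy : ℝ) (hox1 : 1 ≤ ox) (hox2 : ox ≤ 1 / (8 * u) - 2)
    (hoy1 : 1 ≤ oy) (hoy2 : oy ≤ 1 / (8 * u) - 2)
    (xh xl yh yl : ℝ)
    (hxh : xh ∈ Fp p) (hxl : xl ∈ Fp p) (hyh : yh ∈ Fp p) (hyl : yl ∈ Fp p)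
    (hovx : |xl| ≤ ox * u * |xh|) (hovy : |yl| ≤ oy * u * |yh|)
    (sh a' b' da db sl v w zh d zl : ℝ)
    (hrun : SloppyFaithful p xh xl yh yl sh a' b' da db sl v w zh d zl) :
    |zh + zl - (sh + w)| ≤ u ^ 2 * |sh + w| := by
  obtain rfl : u = unitRoundoff p := hu
  exact sloppy_normalization_valid_general hp hxh hyh
    (abs_add_le_max_div_four_of_overlap (unitRoundoff_pos p) hox2 hoy2 hovx hovy) hrun
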